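/- Let q be a real number with 0 < q and q ≠ 1, let h₁, h₂, l₁, α₁, λ be real numbers and t₁, t₂ nonzero reals. Assume λ + α₁ = -N for some positive integer N (so (q^{λ+α₁};q)_n = 0 for all n > N and the series below is a finite sum), and assume q^{h₂-l₁+n}·t₂/t₁ ≠ 1 for all integers 1 ≤ n ≤ N. Then the function g(x) = x^{-α₁} · Σ_{n=0}^{N} (q^{h₂+1/2}t₂/x;q)_n · q^n · (q^{λ+α₁};q)_n / (q^{h₂-l₁+1}·t₂/t₁;q)_n · Σ_{k=0}^{n} [(q^{λ-h₁+l₁+α₁};q)_k / ((q;q)_k (q;q)_{n-k})] · q^{k(k+1)/2} · (-q^{h₂-l₁}·t₂/t₁)^k satisfies the variant of the confluent q-hypergeometric equation of type (1,2) for all x > 0. -/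

import Mathlib

/-- The finite q-shifted factorial `(a;q)_n = ∏_{i=0}^{n-1} (1 - a q^i)`. -/
noncomputable def qPoch (q a : ℝ) (n : ℕ) : ℝ :=
  ∏ i ∈ Finset.range n, (1 - a * q ^ i)

/-- The variant of the confluent q-hypergeometric equation of type (1,2) (for `x > 0`). -/
def confEq12 (q h₁ h₂ l₁ α₁ lam t₁ t₂ : ℝ) (g : ℝ → ℝ) : Prop :=
  ∀ x : ℝ, 0 < x →
    q ^ (h₁ + h₂ - l₁ - 2 * lam + 1/2) * t₂ * (q ^ (l₁ - 1/2) * t₁ - x) * g (q * x)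
    + (x - q ^ (h₁ + 1/2) * t₁) * (x - q ^ (h₂ + 1/2) * t₂) * g (x / q)
    - (q ^ α₁ * x ^ 2
        - q ^ (h₁ + h₂ - lam + 1/2) * (q ^ (-h₂) * t₁ + q ^ (-h₁) * t₂ + q ^ (-l₁) * t₂) * x
        + q ^ (h₁ + h₂ - lam) * (q + 1) * t₁ * t₂) * g x = 0

/-!
Put `A = q^(λ+α₁)`, `B = q^(λ-h₁+l₁+α₁)`, `s = q^(h₂-l₁) t₂/t₁` and `y = q^(h₂+1/2) t₂/x`.
Stripped of the prefactor `x^(-α₁)`, the equation becomes a `q`-difference equation in `y` whose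
operator sends `(y;q)_n` to `y` times a combination of `(y;q)_(n-1)`, `(y;q)_n` and `(y;q)_(n+1)`.
The inner sums `S n` are the coefficients of the product of the power series `∑ X^k / (q;q)_k` and a
`₁φ₁`; the `q`-difference equations of the two factors give one for the product, which is a
three-term recurrence for `S`. By this recurrence the operator applied to the partial sums
telescopes, as in the Christoffel-Darboux formula, and the remaining boundary term contains the
factor `1 - A q^N = 0`.
-/

open Finset PowerSeries

section qPochhammer

variable (q a : ℝ) (n : ℕ)

lemma qPoch_zero : qPoch q a 0 = 1 := prod_range_zero _

lemma qPoch_succ : qPoch q a (n + 1) = qPoch q a n * (1 - a * q ^ n) := prod_range_succ _ _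

lemma qPoch_succ' : qPoch q a (n + 1) = (1 - a) * qPoch q (q * a) n := by
  simp only [qPoch, prod_range_succ', pow_zero, mul_one, pow_succ']
  rw [mul_comm]
  exact congrArg _ (prod_congr rfl fun i _ ↦ by ring)

variable {q}

lemma one_sub_pow_succ_ne_zero (hq : ¬ IsOfFinOrder q) : 1 - q ^ (n + 1) ≠ 0 := fun h ↦
  hq <| isOfFinOrder_iff_pow_eq_one.2 ⟨n + 1, n.succ_pos, (sub_eq_zero.1 h).symm⟩

lemma qPoch_self_succ : qPoch q q (n + 1) = qPoch q q n * (1 - q ^ (n + 1)) := by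
  rw [qPoch_succ, pow_succ']

lemma qPoch_self_ne_zero (hq : ¬ IsOfFinOrder q) : qPoch q q n ≠ 0 :=
  prod_ne_zero_iff.2 fun i _ ↦ pow_succ' q i ▸ one_sub_pow_succ_ne_zero i hq

end qPochhammer

section ThreeTermRecurrence

variable {R : Type*} [CommRing R]

/-- The middle coefficient of the three-term recurrence `IsConfluentRec`. -/
def confluentRecCoeff (q B s : R) (n : ℕ) : R :=
  1 + q - (1 + s) * q ^ (n + 1) + B * s * q ^ (2 * n + 1)

/-- The three-term recurrence satisfied by the inner sums of the confluent `q`-hypergeometric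
solution. The field `one` is the case `n = -1` of `add_two` with the convention `S (-1) = 0`. -/
structure IsConfluentRec (q B s : R) (S : ℕ → R) : Prop where
  one : (1 - q) * S 1 = confluentRecCoeff q B s 0 * S 0
  add_two (n : ℕ) : (1 - q ^ (n + 2)) * S (n + 2) =
    confluentRecCoeff q B s (n + 1) * S (n + 1) - q * (1 - s * q ^ (n + 1)) * S n

lemma mul_qDifference_eq {q B s : R} {U V : R⟦X⟧}
    (hU : U - rescale q U = -(C (s * q) * X * (rescale q U - C B * rescale q (rescale q U))))
    (hV : rescale q V = (1 - X) * V) :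
    (1 - X) * (1 - C q * X) * (U * V) =
      (1 - C q * X) * (1 - C (s * q) * X) * rescale q (U * V)
        + C (B * s * q) * X * rescale q (rescale q (U * V)) := by
  have hV₂ : rescale q (rescale q V) = (1 - C q * X) * ((1 - X) * V) := by
    rw [hV, map_mul, hV, map_sub, map_one, rescale_X]
  rw [map_mul (rescale q) U, map_mul (rescale q) (rescale q U), hV₂, hV]
  simp only [map_mul] at hU ⊢
  linear_combination (1 - X) * (1 - C q * X) * V * hU

lemma isConfluentRec_coeff {q B s : R} {S : R⟦X⟧}
    (hS : (1 - X) * (1 - C q * X) * S =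
      (1 - C q * X) * (1 - C (s * q) * X) * rescale q S
        + C (B * s * q) * X * rescale q (rescale q S)) :
    IsConfluentRec q B s fun n ↦ coeff n S := by
  have hS' : S - C (1 + q) * (X * S) + C q * (X * (X * S)) =
      rescale q S - C (q + s * q) * (X * rescale q S) + C (q * (s * q)) * (X * (X * rescale q S))
        + C (B * s * q) * (X * rescale q (rescale q S)) := by
    simp only [map_add, map_mul, map_one] at hS ⊢
    linear_combination hS
  have hcoeff (n : ℕ) := congrArg (coeff (n + 1)) hS'
  simp only [map_add (coeff _), map_sub, coeff_C_mul, coeff_succ_X_mul, coeff_rescale] at hcoeff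
  constructor
  · have h := hcoeff 0
    simp only [coeff_zero_X_mul] at h
    rw [confluentRecCoeff]
    linear_combination h
  · intro n
    have h := hcoeff (n + 1)
    simp only [coeff_succ_X_mul, coeff_rescale] at h
    rw [confluentRecCoeff]
    linear_combination h

end ThreeTermRecurrence

section GeneratingSeries

variable {q : ℝ}

/-- The `q`-exponential series `∑ X^k / (q;q)_k`. -/
noncomputable def qExpSeries (q : ℝ) : ℝ⟦X⟧ := .mk fun k ↦ (qPoch q q k)⁻¹

/-- The confluent basic hypergeometric series `₁φ₁(B; 0; q, s q X)`. -/
noncomputable def qConfluentSeries (q B s : ℝ) : ℝ⟦X⟧ :=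
  .mk fun k ↦ qPoch q B k / qPoch q q k * q ^ (k + 1).choose 2 * (-s) ^ k

/-- The inner sum of the confluent `q`-hypergeometric solution, encoded as a coefficient of the
product of its two generating series. -/
noncomputable def confluentCoeff (q B s : ℝ) (n : ℕ) : ℝ :=
  coeff n (qConfluentSeries q B s * qExpSeries q)

lemma rescale_qExpSeries (hq : ¬ IsOfFinOrder q) :
    rescale q (qExpSeries q) = (1 - X) * qExpSeries q := by
  ext n
  cases n with
  | zero => simp [sub_mul, qExpSeries]
  | succ n =>
    simp only [sub_mul, one_mul, map_sub, coeff_rescale, coeff_succ_X_mul, qExpSeries, coeff_mk,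
      qPoch_self_succ]
    have := qPoch_self_ne_zero n hq
    have := one_sub_pow_succ_ne_zero n hq
    field_simp
    ring

lemma coeff_succ_qConfluentSeries (hq : ¬ IsOfFinOrder q) (B s : ℝ) (n : ℕ) :
    coeff (n + 1) (qConfluentSeries q B s) * (1 - q ^ (n + 1)) =
      -(1 - B * q ^ n) * s * q ^ (n + 1) * coeff n (qConfluentSeries q B s) := by
  have hcancel := div_mul_cancel₀ (qPoch q B n / qPoch q q n) (one_sub_pow_succ_ne_zero n hq)
  simp only [qConfluentSeries, coeff_mk]
  rw [qPoch_succ q B, qPoch_self_succ, mul_div_right_comm, ← div_div, Nat.choose_succ_succ',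
    Nat.choose_one_right]
  linear_combination (1 - B * q ^ n) * q ^ (n + 1 + (n + 1).choose 2) * (-s) ^ (n + 1) * hcancel

lemma qConfluentSeries_sub_rescale (hq : ¬ IsOfFinOrder q) (B s : ℝ) :
    qConfluentSeries q B s - rescale q (qConfluentSeries q B s) =
      -(C (s * q) * X * (rescale q (qConfluentSeries q B s)
        - C B * rescale q (rescale q (qConfluentSeries q B s)))) := by
  ext n
  cases n with
  | zero =>
    simp only [mul_assoc, map_sub, map_neg, coeff_C_mul, coeff_zero_X_mul, coeff_rescale]
    ring
  | succ n =>
    simp only [mul_assoc (C (s * q)), map_sub, map_neg, coeff_C_mul, coeff_succ_X_mul,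
      coeff_rescale]
    linear_combination coeff_succ_qConfluentSeries hq B s n

lemma isConfluentRec_confluentCoeff (hq : ¬ IsOfFinOrder q) (B s : ℝ) :
    IsConfluentRec q B s (confluentCoeff q B s) :=
  isConfluentRec_coeff <|
    mul_qDifference_eq (qConfluentSeries_sub_rescale hq B s) (rescale_qExpSeries hq)

lemma confluentCoeff_eq_sum (B s : ℝ) (n : ℕ) :
    confluentCoeff q B s n = ∑ k ∈ range (n + 1), qPoch q B k / (qPoch q q k * qPoch q q (n - k)) *
      q ^ ((k : ℝ) * ((k : ℝ) + 1) / 2) * (-s) ^ k := by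
  rw [confluentCoeff, coeff_mul, Nat.sum_antidiagonal_eq_sum_range_succ_mk]
  refine sum_congr rfl fun k _ ↦ ?_
  have hpow : q ^ ((k : ℝ) * ((k : ℝ) + 1) / 2) = q ^ (k + 1).choose 2 := by
    rw [← Real.rpow_natCast, Nat.cast_choose_two]
    push_cast
    ring_nf
  simp only [qConfluentSeries, qExpSeries, coeff_mk, hpow]
  ring

end GeneratingSeries

section Operator

variable {q : ℝ} (A B s : ℝ)

/-- The operator of the confluent `q`-hypergeometric equation of type (1,2) in the variable
`y = q^(h₂+1/2) t₂/x`, acting on the factor `F y` of a solution `x^(-α₁) F y`. The parameters stand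
for `A = q^(λ+α₁)`, `B = q^(λ-h₁+l₁+α₁)` and `s = q^(h₂-l₁) t₂/t₁`. -/
noncomputable def confluentOp (q A B s : ℝ) : (ℝ → ℝ) →ₗ[ℝ] (ℝ → ℝ) where
  toFun F y := y * (y - q * s) * F (y / q) + q * A * (B * s - A * y) * (1 - y) * F (q * y)
    - (q * A * B * s - q * (A + B * s + A * s) * y + A * (q + 1) * y ^ 2) * F y
  map_add' F G := by ext y; simp only [Pi.add_apply]; ring
  map_smul' c F := by ext y; simp only [Pi.smul_apply, smul_eq_mul, RingHom.id_apply]; ring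

/-- The weights `v n = (A;q)_n / (q^n (sq;q)_n)` that make the action of `confluentOp` on the
functions `(y;q)_n` adjoint to the recurrence `IsConfluentRec`; in terms of them the solution has
the coefficients `q^(2n) v n S n`. -/
noncomputable def confluentWeight (q A s : ℝ) (n : ℕ) : ℝ :=
  qPoch q A n / (q ^ n * qPoch q (q * s) n)

lemma confluentWeight_zero : confluentWeight q A s 0 = 1 := by
  simp [confluentWeight, qPoch_zero]

lemma pow_mul_confluentWeight (hq : q ≠ 0) (n : ℕ) :
    q ^ (2 * n) * confluentWeight q A s n = q ^ n * qPoch q A n / qPoch q (q * s) n := by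
  rw [confluentWeight, mul_div_assoc', two_mul, pow_add, mul_assoc,
    mul_div_mul_left _ _ (pow_ne_zero n hq)]

lemma confluentWeight_succ (hq : q ≠ 0) {n : ℕ} (hs : 1 - s * q ^ (n + 1) ≠ 0) :
    q * (1 - s * q ^ (n + 1)) * confluentWeight q A s (n + 1) =
      (1 - A * q ^ n) * confluentWeight q A s n := by
  have hfactor : 1 - q * s * q ^ n = 1 - s * q ^ (n + 1) := by ring
  rw [confluentWeight, confluentWeight, qPoch_succ, qPoch_succ, hfactor, pow_succ q n,
    mul_div_assoc', mul_div_assoc', ← mul_div_mul_left _ (q ^ n * _) (mul_ne_zero hq hs)]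
  ring

/-- For `n = 0` the truncated index in `(y;q)_(n-1)` is harmless, since its coefficient is `0`. -/
lemma pow_mul_confluentOp_qPoch (hq : q ≠ 0) (n : ℕ) (y : ℝ) :
    q ^ (2 * n) * confluentOp q A B s (qPoch q · n) y =
      y * ((1 - A * q ^ n) * (confluentRecCoeff q B s n * qPoch q y n
          - (1 - A * q ^ (n + 1)) * qPoch q y (n + 1))
        - q * (1 - q ^ n) * (1 - s * q ^ n) * qPoch q y (n - 1)) := by
  have hup : (1 - y) * qPoch q (q * y) n = qPoch q y n * (1 - y * q ^ n) := by
    rw [← qPoch_succ', qPoch_succ]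
  simp only [confluentOp, confluentRecCoeff, LinearMap.coe_mk, AddHom.coe_mk, qPoch_succ q y n]
  cases n with
  | zero =>
    simp only [qPoch_zero]
    ring
  | succ n =>
    have hdown : q * qPoch q (y / q) (n + 1) = (q - y) * qPoch q y n := by
      rw [qPoch_succ', mul_div_cancel₀ _ hq, ← mul_assoc, mul_one_sub, mul_div_cancel₀ _ hq]
    rw [Nat.add_sub_cancel]
    rw [qPoch_succ q y] at hup ⊢
    linear_combination q ^ (2 * n + 1) * y * (y - q * s) * hdown
      + q ^ (2 * n + 2) * q * A * (B * s - A * y) * hup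

variable {B s} {S : ℕ → ℝ}

lemma sum_confluentOp_qPoch (hq : q ≠ 0) (hS : IsConfluentRec q B s S) (y : ℝ) (N : ℕ)
    (hs : ∀ n < N, 1 - s * q ^ (n + 1) ≠ 0) :
    ∑ n ∈ range (N + 1), q ^ (2 * n) * confluentWeight q A s n * S n *
        confluentOp q A B s (qPoch q · n) y =
      y * confluentWeight q A s N * (1 - A * q ^ N) *
        ((1 - q ^ (N + 1)) * S (N + 1) * qPoch q y N
          - (1 - A * q ^ (N + 1)) * S N * qPoch q y (N + 1)) := by
  induction N with
  | zero =>
    have hop := pow_mul_confluentOp_qPoch A B s hq 0 y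
    rw [sum_range_one, confluentWeight_zero]
    linear_combination S 0 * hop - y * (1 - A) * qPoch q y 0 * hS.one
  | succ N ih =>
    have hop := pow_mul_confluentOp_qPoch A B s hq (N + 1) y
    have hw := confluentWeight_succ A s hq (hs N N.lt_succ_self)
    rw [sum_range_succ, ih fun n hn ↦ hs n (hn.trans N.lt_succ_self)]
    rw [Nat.add_sub_cancel] at hop
    linear_combination confluentWeight q A s (N + 1) * S (N + 1) * hop
      - y * ((1 - q ^ (N + 1)) * S (N + 1) * qPoch q y N
          - (1 - A * q ^ (N + 1)) * S N * qPoch q y (N + 1)) * hw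
      - y * confluentWeight q A s (N + 1) * (1 - A * q ^ (N + 1)) * qPoch q y (N + 1) *
        hS.add_two N

lemma confluentOp_sum_eq_zero (hq : q ≠ 0) (hS : IsConfluentRec q B s S) {N : ℕ}
    (hs : ∀ n < N, 1 - s * q ^ (n + 1) ≠ 0) (hA : A * q ^ N = 1) :
    confluentOp q A B s
      (∑ n ∈ range (N + 1), (q ^ (2 * n) * confluentWeight q A s n * S n) • (qPoch q · n)) = 0 := by
  ext y
  simp only [map_sum, map_smul, Finset.sum_apply, Pi.smul_apply, smul_eq_mul, Pi.zero_apply]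
  rw [sum_confluentOp_qPoch A hq hS y N hs, hA, sub_self, mul_zero, zero_mul]

end Operator

lemma confEq12_rpow_mul {q h₁ h₂ l₁ α₁ lam t₁ t₂ : ℝ} (hq : 0 < q) (ht₁ : t₁ ≠ 0) (ht₂ : t₂ ≠ 0)
    {F : ℝ → ℝ} (hF : confluentOp q (q ^ (lam + α₁)) (q ^ (lam - h₁ + l₁ + α₁))
      (q ^ (h₂ - l₁) * t₂ / t₁) F = 0) :
    confEq12 q h₁ h₂ l₁ α₁ lam t₁ t₂
      (fun x ↦ x ^ (-α₁) * F (q ^ (h₂ + 1 / 2) * t₂ / x)) := by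
  intro x hx
  have hop := congrFun hF (q ^ (h₂ + 1 / 2) * t₂ / x)
  simp only [confluentOp, LinearMap.coe_mk, AddHom.coe_mk, Pi.zero_apply] at hop
  have hdown : q ^ (h₂ + 1 / 2) * t₂ / (q * x) = q ^ (h₂ + 1 / 2) * t₂ / x / q := by field_simp
  have hup : q ^ (h₂ + 1 / 2) * t₂ / (x / q) = q * (q ^ (h₂ + 1 / 2) * t₂ / x) := by field_simp
  simp only [hdown, hup, Real.mul_rpow hq.le hx.le, Real.div_rpow hx.le hq.le]
  generalize hA : q ^ (lam + α₁) = A, hB : q ^ (lam - h₁ + l₁ + α₁) = B,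
    hs : q ^ (h₂ - l₁) * t₂ / t₁ = s at hop
  -- The factor relating the two equations is read off from the coefficients of `F` at `q y`.
  refine Eq.trans ?_ (mul_eq_zero_of_right (x ^ (-α₁) * q ^ α₁ * x ^ 2 / (q * A * B * s)) hop)
  subst hA hB hs
  obtain ⟨r, hr, rfl⟩ : ∃ r : ℝ, 0 < r ∧ r ^ 2 = q :=
    ⟨√q, Real.sqrt_pos.2 hq, Real.sq_sqrt hq.le⟩
  have hsqrt : (r ^ 2) ^ (1 / 2 : ℝ) = r := by rw [← Real.sqrt_eq_rpow, Real.sqrt_sq hr.le]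
  have hsq : (r ^ 2) ^ (2 * lam) = ((r ^ 2) ^ lam) ^ 2 := by
    rw [mul_comm, Real.rpow_mul hq.le, Real.rpow_two]
  simp only [Real.rpow_add hq, Real.rpow_sub hq, Real.rpow_neg hq.le, hsqrt, hsq]
  field_simp

theorem stmt5 (q h₁ h₂ l₁ α₁ lam t₁ t₂ : ℝ) (N : ℕ)
    (hq : 0 < q) (hq1 : q ≠ 1) (ht₁ : t₁ ≠ 0) (ht₂ : t₂ ≠ 0)
    (hN : 0 < N) (hNlam : lam + α₁ = -(N : ℝ))
    (hden : ∀ n : ℕ, 1 ≤ n → n ≤ N → q ^ (h₂ - l₁ + (n : ℝ)) * t₂ / t₁ ≠ 1) :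
    confEq12 q h₁ h₂ l₁ α₁ lam t₁ t₂ (fun x =>
      x ^ (-α₁) * ∑ n ∈ Finset.range (N + 1),
        qPoch q (q ^ (h₂ + 1/2) * t₂ / x) n * q ^ n * qPoch q (q ^ (lam + α₁)) n /
            qPoch q (q ^ (h₂ - l₁ + 1) * t₂ / t₁) n *
          ∑ k ∈ Finset.range (n + 1),
            qPoch q (q ^ (lam - h₁ + l₁ + α₁)) k / (qPoch q q k * qPoch q q (n - k)) *
              q ^ ((k : ℝ) * ((k : ℝ) + 1) / 2) * (-(q ^ (h₂ - l₁) * t₂ / t₁)) ^ k) := by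
  have hq_ord : ¬ IsOfFinOrder q := fun h ↦ hq1 (h.eq_one hq.le)
  have hA : q ^ (lam + α₁) * q ^ N = 1 := by
    rw [hNlam, Real.rpow_neg hq.le, Real.rpow_natCast, inv_mul_cancel₀ (pow_ne_zero N hq.ne')]
  have hs : ∀ n < N, 1 - q ^ (h₂ - l₁) * t₂ / t₁ * q ^ (n + 1) ≠ 0 := by
    intro n hn
    rw [sub_ne_zero, ← Real.rpow_natCast, div_mul_eq_mul_div, mul_right_comm, ← Real.rpow_add hq]
    exact (hden (n + 1) n.succ_pos hn).symm
  have hbase : q ^ (h₂ - l₁ + 1) * t₂ / t₁ = q * (q ^ (h₂ - l₁) * t₂ / t₁) := by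
    rw [Real.rpow_add_one hq.ne']
    ring
  convert confEq12_rpow_mul hq ht₁ ht₂ <| confluentOp_sum_eq_zero _ hq.ne'
    (isConfluentRec_confluentCoeff hq_ord _ _) hs hA using 4 with x
  rw [Finset.sum_apply]
  refine sum_congr rfl fun n _ ↦ ?_
  rw [← confluentCoeff_eq_sum, hbase, Pi.smul_apply, smul_eq_mul,
    pow_mul_confluentWeight _ _ hq.ne']
  ring
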